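/- arXiv:2008.11321 — 4 statements merged into one kernel-verified Lean document; each statement's English description precedes it below -/
import Mathlib

section
/- In the ADG peeling process with parameter ε > 0, every iteration removes at least an ε/(1+ε) fraction of the remaining vertices, i.e. |U_{i+1}| ≤ |U_i|/(1+ε) for every i ≥ 0; consequently |U_i| ≤ n/(1+ε)^i for all i, and U_i = ∅ whenever (1+ε)^i > n. -/
/-- The degree of `v` in the subgraph of `G` induced by the vertex set `U`. -/
def SimpleGraph.degIn {V : Type*} [DecidableEq V] (G : SimpleGraph V) [DecidableRel G.Adj]
    (U : Finset V) (v : V) : ℕ :=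
  (U.filter (fun u => G.Adj v u)).card

/-- The average degree of the subgraph of `G` induced by the vertex set `U`. -/
noncomputable def SimpleGraph.avgDegIn {V : Type*} [DecidableEq V] (G : SimpleGraph V)
    [DecidableRel G.Adj] (U : Finset V) : ℝ :=
  (∑ v ∈ U, (G.degIn U v : ℝ)) / U.card

/-- In the ADG peeling process with parameter `ε > 0` (with `U 0 = V` and
`U (i+1) = U i \ R i`, where `R i` is the set of vertices of `U i` whose induced degree is
at most `(1+ε)` times the average induced degree of `U i`), every iteration removes at
least an `ε/(1+ε)` fraction of the remaining vertices, i.e. `|U (i+1)| ≤ |U i|/(1+ε)`;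
consequently `|U i| ≤ n/(1+ε)^i` for all `i`, and `U i = ∅` whenever `(1+ε)^i > n`. -/
theorem adg_peeling_geometric_decrease {V : Type*} [Fintype V] [DecidableEq V]
    (G : SimpleGraph V) [DecidableRel G.Adj] (ε : ℝ) (hε : 0 < ε)
    (U : ℕ → Finset V)
    (hU0 : U 0 = Finset.univ)
    (hUstep : ∀ i, U (i + 1) =
      U i \ (U i).filter (fun v => (G.degIn (U i) v : ℝ) ≤ (1 + ε) * G.avgDegIn (U i))) :
    (∀ i, ((U (i + 1)).card : ℝ) ≤ ((U i).card : ℝ) / (1 + ε))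
    ∧ (∀ i, ((U i).card : ℝ) ≤ (Fintype.card V : ℝ) / (1 + ε) ^ i)
    ∧ (∀ i, (Fintype.card V : ℝ) < (1 + ε) ^ i → U i = ∅) := by
  have h1 : (0 : ℝ) < 1 + ε := by linarith
  have step : ∀ i, ((U (i + 1)).card : ℝ) ≤ ((U i).card : ℝ) / (1 + ε) := by
    intro i
    rw [le_div_iff₀ h1]
    have hsub : U (i + 1) ⊆ U i := by
      rw [hUstep i]; exact Finset.sdiff_subset
    have hdeg : ∀ v ∈ U (i + 1), (1 + ε) * G.avgDegIn (U i) < (G.degIn (U i) v : ℝ) := by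
      intro v hv
      rw [hUstep i, Finset.mem_sdiff, Finset.mem_filter] at hv
      by_contra hc
      exact hv.2 ⟨hv.1, not_lt.mp hc⟩
    rcases (U (i + 1)).eq_empty_or_nonempty with he | ⟨w, hw⟩
    · rw [he]; simp
    have hc : (0 : ℝ) < (U i).card := by
      exact_mod_cast Finset.card_pos.mpr ⟨w, hsub hw⟩
    have hle : ∑ v ∈ U (i + 1), (G.degIn (U i) v : ℝ) ≤ ∑ v ∈ U i, (G.degIn (U i) v : ℝ) :=
      Finset.sum_le_sum_of_subset_of_nonneg hsub (fun _ _ _ => Nat.cast_nonneg _)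
    have hge : ((U (i + 1)).card : ℝ) * ((1 + ε) * G.avgDegIn (U i))
        ≤ ∑ v ∈ U (i + 1), (G.degIn (U i) v : ℝ) := by
      rw [← nsmul_eq_mul]
      exact Finset.card_nsmul_le_sum _ _ _ (fun v hv => (hdeg v hv).le)
    have hS : ∑ v ∈ U i, (G.degIn (U i) v : ℝ) = G.avgDegIn (U i) * (U i).card := by
      unfold SimpleGraph.avgDegIn
      field_simp
    have hA0 : 0 ≤ G.avgDegIn (U i) := by
      unfold SimpleGraph.avgDegIn
      positivity
    have hw0 : (G.degIn (U i) w : ℝ) ≤ ∑ v ∈ U i, (G.degIn (U i) v : ℝ) :=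
      Finset.single_le_sum (f := fun v => (G.degIn (U i) v : ℝ))
        (fun _ _ => Nat.cast_nonneg _) (hsub hw)
    have hSpos : 0 < G.avgDegIn (U i) * (U i).card := by
      rw [← hS]
      exact lt_of_lt_of_le (lt_of_le_of_lt (mul_nonneg h1.le hA0) (hdeg w hw)) hw0
    have hA : 0 < G.avgDegIn (U i) := pos_of_mul_pos_left hSpos hc.le
    have hfin := hge.trans (hle.trans hS.le)
    refine le_of_mul_le_mul_left ?_ hA
    linarith
  have bound : ∀ i, ((U i).card : ℝ) ≤ (Fintype.card V : ℝ) / (1 + ε) ^ i := by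
    intro i
    induction i with
    | zero => simp [hU0]
    | succ k ih =>
      refine (step k).trans ?_
      rw [pow_succ, ← div_div]
      gcongr
  refine ⟨step, bound, fun i hi => ?_⟩
  have hlt : ((U i).card : ℝ) < 1 :=
    (bound i).trans_lt ((div_lt_one (pow_pos h1 i)).mpr hi)
  have : (U i).card < 1 := by exact_mod_cast hlt
  exact Finset.card_eq_zero.mp (by omega)
end

section
/- If G is d-degenerate, then the ADG peeling process with parameter ε > 0 produces a partial 2(1+ε)-approximate degeneracy ordering: every vertex v removed in iteration i (that is, v ∈ R_i) satisfies deg_{U_i}(v) ≤ 2(1+ε)·d, so under the ordering ρ(v) = i every vertex has at most 2(1+ε)·d neighbors of equal or higher rank. -/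
theorem adg_sum_le {V : Type*} [DecidableEq V]
    (G : SimpleGraph V) [DecidableRel G.Adj] (d : ℕ)
    (hdeg : ∀ U : Finset V, U.Nonempty → ∃ v ∈ U, G.degIn U v ≤ d) (n : ℕ) :
    ∀ S : Finset V, S.card = n → ∑ v ∈ S, G.degIn S v ≤ 2 * d * n := by
  induction n with
  | zero =>
    intro S hS
    rw [Finset.card_eq_zero] at hS
    simp [hS]
  | succ n ih =>
    intro S hS
    obtain ⟨v, hv, hvd⟩ := hdeg S (Finset.card_pos.mp (by omega))
    obtain ⟨T, hvT, rfl⟩ : ∃ T, v ∉ T ∧ insert v T = S :=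
      ⟨S.erase v, Finset.notMem_erase v S, Finset.insert_erase hv⟩
    have hT : T.card = n := by
      rw [Finset.card_insert_of_notMem hvT] at hS
      omega
    have h1 : G.degIn (insert v T) v = G.degIn T v := by
      simp [SimpleGraph.degIn, Finset.filter_insert]
    have h2 : ∀ u ∈ T, G.degIn (insert v T) u = G.degIn T u + if G.Adj v u then 1 else 0 := by
      intro u _
      unfold SimpleGraph.degIn
      rw [Finset.filter_insert]
      by_cases h : G.Adj u v
      · rw [if_pos h, if_pos h.symm, Finset.card_insert_of_notMem]
        simp [hvT]
      · rw [if_neg h, if_neg (fun h' => h h'.symm)]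
        rfl
    have h3 : (∑ u ∈ T, if G.Adj v u then 1 else 0) = G.degIn T v := by
      rw [SimpleGraph.degIn, Finset.card_filter]
    rw [Finset.sum_insert hvT, Finset.sum_congr rfl h2, Finset.sum_add_distrib, h3, h1]
    have := ih T hT
    rw [h1] at hvd
    nlinarith

/-- If `G` is `d`-degenerate, then the ADG peeling process with parameter `ε > 0`
(with `U 0 = V` and `U (i+1) = U i \ R i`, where `R i` is the set of vertices of `U i`
whose induced degree is at most `(1+ε)` times the average induced degree of `U i`)
produces a partial `2(1+ε)`-approximate degeneracy ordering: every vertex `v ∈ R i`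
removed in iteration `i` satisfies `deg_{U i}(v) ≤ 2(1+ε)d`, i.e. under the ordering
`ρ(v) = i` every vertex has at most `2(1+ε)d` neighbors of equal or higher rank. -/
theorem adg_peeling_approx_degeneracy_ordering {V : Type*} [Fintype V] [DecidableEq V]
    (G : SimpleGraph V) [DecidableRel G.Adj] (d : ℕ)
    (hdeg : ∀ U : Finset V, U.Nonempty → ∃ v ∈ U, G.degIn U v ≤ d)
    (ε : ℝ) (hε : 0 < ε)
    (U : ℕ → Finset V)
    (hU0 : U 0 = Finset.univ)
    (hUstep : ∀ i, U (i + 1) =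
      U i \ (U i).filter (fun v => (G.degIn (U i) v : ℝ) ≤ (1 + ε) * G.avgDegIn (U i))) :
    ∀ i, ∀ v ∈ (U i).filter (fun v => (G.degIn (U i) v : ℝ) ≤ (1 + ε) * G.avgDegIn (U i)),
      (G.degIn (U i) v : ℝ) ≤ 2 * (1 + ε) * d := by
  intro i v hv
  rw [Finset.mem_filter] at hv
  obtain ⟨hvU, hv⟩ := hv
  have hpos : (0 : ℝ) < (U i).card := by
    exact_mod_cast Finset.card_pos.mpr ⟨v, hvU⟩
  have hs : (∑ v ∈ U i, (G.degIn (U i) v : ℝ)) ≤ 2 * d * (U i).card := by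
    exact_mod_cast adg_sum_le G d hdeg _ (U i) rfl
  have ha : G.avgDegIn (U i) ≤ 2 * d := by
    unfold SimpleGraph.avgDegIn
    rwa [div_le_iff₀ hpos]
  calc (G.degIn (U i) v : ℝ) ≤ (1 + ε) * G.avgDegIn (U i) := hv
    _ ≤ (1 + ε) * (2 * d) := by gcongr
    _ = 2 * (1 + ε) * d := by ring
end

section
/- If G is d-degenerate, then for every nonempty subset U ⊆ V at least ⌈|U|/2⌉ vertices v ∈ U satisfy deg_U(v) ≤ 4d; in particular, removing from U a half of its vertices of lowest induced degree removes only vertices of induced degree at most 4d, so the median-based peeling process ADG-M produces a partial 4-approximate degeneracy ordering. -/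
theorem sum_induced_degree_le {V : Type*} [DecidableEq V]
    (G : SimpleGraph V) [DecidableRel G.Adj] (d : ℕ)
    (hdeg : ∀ U : Finset V, U.Nonempty →
      ∃ v ∈ U, (U.filter (fun u => G.Adj v u)).card ≤ d) (U : Finset V) :
    ∑ v ∈ U, (U.filter (fun u => G.Adj v u)).card ≤ 2 * d * U.card := by
  induction U using Finset.strongInduction with
  | H U ih =>
    rcases U.eq_empty_or_nonempty with rfl | hU
    · simp
    obtain ⟨v, hv, hd⟩ := hdeg U hU
    have hW := ih (U.erase v) (Finset.erase_ssubset hv)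
    have hnot : v ∉ U.erase v := Finset.notMem_erase v U
    have hins : U = insert v (U.erase v) := (Finset.insert_erase hv).symm
    generalize U.erase v = W at hW hnot hins
    subst hins
    rw [Finset.card_insert_of_notMem hnot, Finset.sum_insert hnot]
    simp only [Finset.card_filter, Finset.sum_insert hnot, Finset.sum_add_distrib,
      SimpleGraph.irrefl, if_false, zero_add] at hW hd ⊢
    simp only [G.adj_comm _ v]
    nlinarith

/-- If `G` is `d`-degenerate, then for every nonempty subset `U` of the vertices at
least `⌈|U|/2⌉` vertices `v ∈ U` satisfy `deg_U(v) ≤ 4d` (so removing from `U` a half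
of its vertices of lowest induced degree removes only vertices of induced degree at
most `4d`, and the median-based peeling process ADG-M produces a partial 4-approximate
degeneracy ordering). -/
theorem half_vertices_degree_le_four_d {V : Type*} [Fintype V] [DecidableEq V]
    (G : SimpleGraph V) [DecidableRel G.Adj] (d : ℕ)
    (hdeg : ∀ U : Finset V, U.Nonempty →
      ∃ v ∈ U, (U.filter (fun u => G.Adj v u)).card ≤ d) :
    ∀ U : Finset V, U.Nonempty →
      (U.card + 1) / 2 ≤ (U.filter (fun v => (U.filter (fun u => G.Adj v u)).card ≤ 4 * d)).card := by
  intro U hU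
  have hs := sum_induced_degree_le G d hdeg U
  have hc := Finset.card_filter_add_card_filter_not (s := U)
    (fun v => (U.filter (fun u => G.Adj v u)).card ≤ 4 * d)
  have h1 : (U.filter (fun v => ¬ (U.filter (fun u => G.Adj v u)).card ≤ 4 * d)).card
      * (4 * d + 1) ≤ ∑ v ∈ U, (U.filter (fun u => G.Adj v u)).card := by
    rw [← smul_eq_mul]
    refine (Finset.card_nsmul_le_sum _ (fun v => (U.filter (fun u => G.Adj v u)).card) _ ?_).trans
      (Finset.sum_le_sum_of_subset (Finset.filter_subset _ _))
    intro v hv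
    have := (Finset.mem_filter.mp hv).2
    omega
  generalize (U.filter (fun v => ¬ (U.filter (fun u => G.Adj v u)).card ≤ 4 * d)).card = b at *
  generalize (U.filter (fun v => (U.filter (fun u => G.Adj v u)).card ≤ 4 * d)).card = a at *
  have h2 : b ≤ a := by
    by_contra! h
    rw [← hc] at hs
    nlinarith [Nat.mul_le_mul_left d h.le]
  omega
end

section
/- In the ADG peeling process with parameter ε > 0, the total number of vertex slots processed over all iterations is linear in n: ∑_{i ≥ 0} |U_i| ≤ ((1+ε)/ε)·n. -/
/-- In the ADG peeling process with parameter `ε > 0` (with `U 0 = V` and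
`U (i+1) = U i \ R i`, where `R i` is the set of vertices of `U i` whose induced degree
is at most `(1+ε)` times the average induced degree of `U i`), the total number of
vertex slots processed over all iterations is linear in `n`:
`∑_{i ≥ 0} |U i| ≤ ((1+ε)/ε) · n`. -/
theorem adg_peeling_total_work_linear {V : Type*} [Fintype V] [DecidableEq V]
    (G : SimpleGraph V) [DecidableRel G.Adj] (ε : ℝ) (hε : 0 < ε)
    (U : ℕ → Finset V)
    (hU0 : U 0 = Finset.univ)
    (hUstep : ∀ i, U (i + 1) =
      U i \ (U i).filter (fun v => (G.degIn (U i) v : ℝ) ≤ (1 + ε) * G.avgDegIn (U i))) :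
    ∑' i : ℕ, ((U i).card : ℝ) ≤ ((1 + ε) / ε) * (Fintype.card V : ℝ) := by
  have key : ∀ i, (1 + ε) * ((U (i + 1)).card : ℝ) ≤ ((U i).card : ℝ) := by
    intro i
    have hsub : U (i + 1) ⊆ U i := by rw [hUstep i]; exact Finset.sdiff_subset
    have hlt : ∀ v ∈ U (i + 1), (1 + ε) * G.avgDegIn (U i) < (G.degIn (U i) v : ℝ) := by
      intro v hv
      rw [hUstep i, Finset.mem_sdiff, Finset.mem_filter] at hv
      by_contra hc
      exact hv.2 ⟨hv.1, not_lt.mp hc⟩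
    rcases (U (i + 1)).eq_empty_or_nonempty with he | ⟨w, hw⟩
    · simp [he]
    have hpos : (0 : ℝ) < ((U i).card : ℝ) := by
      exact_mod_cast Finset.card_pos.mpr ⟨w, hsub hw⟩
    have hS : G.avgDegIn (U i) * ((U i).card : ℝ) = ∑ v ∈ U i, (G.degIn (U i) v : ℝ) := by
      unfold SimpleGraph.avgDegIn
      exact div_mul_cancel₀ _ hpos.ne'
    have h0 : 0 ≤ G.avgDegIn (U i) := by
      unfold SimpleGraph.avgDegIn
      positivity
    have h1 : ∑ v ∈ U (i + 1), (G.degIn (U i) v : ℝ) ≤ ∑ v ∈ U i, (G.degIn (U i) v : ℝ) :=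
      Finset.sum_le_sum_of_subset_of_nonneg hsub (fun _ _ _ => Nat.cast_nonneg _)
    have h2 : ((U (i + 1)).card : ℝ) * ((1 + ε) * G.avgDegIn (U i))
        ≤ ∑ v ∈ U (i + 1), (G.degIn (U i) v : ℝ) := by
      have := Finset.card_nsmul_le_sum (U (i + 1)) (fun v => (G.degIn (U i) v : ℝ))
        ((1 + ε) * G.avgDegIn (U i)) (fun v hv => (hlt v hv).le)
      simpa [nsmul_eq_mul] using this
    have hap : 0 < G.avgDegIn (U i) := by
      rcases h0.lt_or_eq with h | h
      · exact h
      exfalso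
      have hw1 := hlt w hw
      have hw2 := Finset.single_le_sum (f := fun v => (G.degIn (U i) v : ℝ))
        (fun _ _ => Nat.cast_nonneg _) (hsub hw)
      rw [← hS, ← h] at hw2
      rw [← h] at hw1
      linarith
    refine le_of_mul_le_mul_left ?_ hap
    linarith
  have hpart : ∀ n, ε * ∑ i ∈ Finset.range n, ((U i).card : ℝ)
      ≤ (1 + ε) * ((Fintype.card V : ℝ) - ((U n).card : ℝ)) := by
    intro n
    induction n with
    | zero => simp [hU0]
    | succ k ih =>
      rw [Finset.sum_range_succ]
      have := key k
      linarith
  refine Real.tsum_le_of_sum_range_le (fun _ => Nat.cast_nonneg _) (fun n => ?_)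
  rw [div_mul_eq_mul_div, le_div_iff₀ hε]
  have h1 := hpart n
  have h2 : 0 ≤ (1 + ε) * ((U n).card : ℝ) := by positivity
  linarith
end
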